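/- Let d ≥ 2, let u : ℤ^d → [0,∞) be admissible, and let x₀ ∈ ℤ^d. Then the sequence (R^k u(x₀))_{k≥1} is eventually constant; in particular the pointwise limit R_{ℤ^d} u(x₀) = lim_{k→∞} R^k u(x₀) exists, so the Schwarz rearrangement of u is well defined. -/

import Mathlib

open Filter Topology

noncomputable section

abbrev ZLat (d : ℕ) := Fin d → ℤ

def stdVec (d : ℕ) (i : Fin d) : Fin d → ℝ := fun j => if j = i then 1 else 0

/-- The set of directions E⃗ ⊆ ℝ^d. -/
def Evec (d : ℕ) : Set (Fin d → ℝ) :=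
  {e | (∃ i, e = stdVec d i) ∨
    (∃ i j : Fin d, i < j ∧ e = fun k => (stdVec d i k + stdVec d j k) / 2) ∨
    (∃ i j : Fin d, i < j ∧ e = fun k => (stdVec d i k - stdVec d j k) / 2)}

/-- A fixed enumeration of E⃗ (for d = 2 it is e₁, e₂, (e₁+e₂)/2, (e₁-e₂)/2). -/
def EvecList (d : ℕ) : List (Fin d → ℝ) :=
  ((List.finRange d).map (stdVec d)) ++
  ((List.finRange d).flatMap fun i => (List.finRange d).filterMap fun j =>
    if i < j then some (fun k => (stdVec d i k + stdVec d j k) / 2) else none) ++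
  ((List.finRange d).flatMap fun i => (List.finRange d).filterMap fun j =>
    if i < j then some (fun k => (stdVec d i k - stdVec d j k) / 2) else none)

/-- The n-th largest value of `u`, counted with multiplicity (1-indexed). -/
def nthLargest {α : Type*} (u : α → NNReal) (n : ℕ) : NNReal :=
  sSup {t | ∃ Ω : Finset α, Ω.card = n ∧ ∀ x ∈ Ω, t ≤ u x}

/-- The 1-indexed position of the point with doubled coordinate `m` in the
spiral order 0, 1, −1, 2, −2, … (for even m) resp. 1/2, −1/2, 3/2, −3/2, … (for odd m). -/
def posIdx (m : ℤ) : ℕ := (if 0 < m then m else 1 - m).toNat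

/-- `x` and `y` lie on a common line with direction `e`. -/
def sameLine {d : ℕ} (e : Fin d → ℝ) (x y : ZLat d) : Prop :=
  ∃ c : ℝ, (fun i => (x i : ℝ) - (y i : ℝ)) = c • e

/-- Twice the inner product ⟨e, x⟩, as an integer. -/
def pairing {d : ℕ} (e : Fin d → ℝ) (x : ZLat d) : ℤ :=
  ⌊2 * ∑ i, e i * (x i : ℝ)⌋

/-- One-step rearrangement `R_e`. -/
def stepR {d : ℕ} (e : Fin d → ℝ) (u : ZLat d → NNReal) : ZLat d → NNReal :=
  fun x => nthLargest (fun y : {y : ZLat d // sameLine e x y} => u y.1) (posIdx (pairing e x))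

/-- `R^k u` : k successive one-step rearrangements cycling through the fixed enumeration. -/
def iterR (d : ℕ) (u : ZLat d → NNReal) : ℕ → ZLat d → NNReal
  | 0 => u
  | k + 1 => stepR ((EvecList d).getD (k % (EvecList d).length) 0) (iterR d u k)

/-- The Schwarz rearrangement on ℤ^d : pointwise limit of `R^k u`. -/
def RZd (d : ℕ) (u : ZLat d → NNReal) : ZLat d → NNReal :=
  fun x => limUnder atTop fun k => iterR d u k x

def Admissible {α : Type*} (u : α → NNReal) : Prop :=
  ∀ t : NNReal, 0 < t → {x | t < u x}.Finite

def Equimeasurable {α : Type*} (u v : α → NNReal) : Prop :=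
  ∀ t : NNReal, 0 < t → Nonempty ({x | t < u x} ≃ {x | t < v x})

/-- Graph distance (ℓ¹ distance) on the lattice ℤ^d. -/
def latDist {d : ℕ} (x y : ZLat d) : ℕ := ∑ i, (x i - y i).natAbs

/-- The i-th standard basis vector of ℤ^d. -/
def latE {d : ℕ} (i : Fin d) : ZLat d := fun j => if j = i then 1 else 0

/-- ‖∇u‖_p^p : the p-Sobolev energy, summing over each edge {x, x+e_i} once. -/
def gradEnergy (d : ℕ) (p : ℝ) (u : ZLat d → NNReal) : ENNReal :=
  ∑' (x : ZLat d) (i : Fin d), ENNReal.ofReal (|(u (x + latE i) : ℝ) - (u x : ℝ)| ^ p)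

/-- ‖∇u‖_p. -/
def gradNorm (d : ℕ) (p : ℝ) (u : ZLat d → NNReal) : ENNReal :=
  gradEnergy d p u ^ (1 / p)

/-- Graph automorphism of the lattice graph ℤ^d. -/
def IsLatAuto {d : ℕ} (σ : ZLat d ≃ ZLat d) : Prop :=
  ∀ x y : ZLat d, latDist (σ x) (σ y) = 1 ↔ latDist x y = 1

def Supermodular (G : NNReal → NNReal → NNReal) : Prop :=
  ∀ s t s₀ t₀ : NNReal, G (s + s₀) t + G s (t + t₀) ≤ G (s + s₀) (t + t₀) + G s t

def StrictlySupermodular (G : NNReal → NNReal → NNReal) : Prop :=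
  ∀ s t s₀ t₀ : NNReal, 0 < s₀ → 0 < t₀ →
    G (s + s₀) t + G s (t + t₀) < G (s + s₀) (t + t₀) + G s t

/-- The values of `u` are strictly decreasing: a₁ > a₂ > a₃ > ⋯ . -/
def StrictRan {α : Type*} (u : α → NNReal) : Prop :=
  ∀ n : ℕ, 0 < n → nthLargest u (n + 1) < nthLargest u n

/-! ### Set level rearrangement -/

def pI {d : ℕ} (e : Fin d → ℝ) (x : ZLat d) : ℕ := posIdx (pairing e x)

def setR {d : ℕ} (e : Fin d → ℝ) (A : Set (ZLat d)) : Set (ZLat d) :=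
  {x | ∃ Ω : Finset (ZLat d), Ω.card = pI e x ∧ ∀ y ∈ Ω, y ∈ A ∧ sameLine e x y}

def setIter (d : ℕ) (A : Set (ZLat d)) : ℕ → Set (ZLat d)
  | 0 => A
  | k + 1 => setR ((EvecList d).getD (k % (EvecList d).length) 0) (setIter d A k)

lemma posIdx_pos (m : ℤ) : 1 ≤ posIdx m := by
  unfold posIdx; split_ifs <;> omega

lemma lt_nthLargest {α : Type*} (u : α → NNReal) (n : ℕ) (hn : 1 ≤ n)
    (C : NNReal) (hC : ∀ x, u x ≤ C) (t : NNReal) :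
    t < nthLargest u n ↔ ∃ Ω : Finset α, Ω.card = n ∧ ∀ x ∈ Ω, t < u x := by
  unfold nthLargest
  constructor
  · intro h
    have hne : {t | ∃ Ω : Finset α, Ω.card = n ∧ ∀ x ∈ Ω, t ≤ u x}.Nonempty := by
      by_contra hc
      rw [Set.not_nonempty_iff_eq_empty] at hc
      rw [hc] at h
      simp at h
    obtain ⟨s, ⟨Ω, h1, h2⟩, hs⟩ := exists_lt_of_lt_csSup hne h
    exact ⟨Ω, h1, fun x hx => lt_of_lt_of_le hs (h2 x hx)⟩
  · rintro ⟨Ω, h1, h2⟩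
    have hΩ : Ω.Nonempty := by rw [← Finset.card_pos]; omega
    obtain ⟨x, hx, hm⟩ := Finset.exists_min_image Ω u hΩ
    refine lt_of_lt_of_le (h2 x hx) (le_csSup ⟨C, ?_⟩ ⟨Ω, h1, hm⟩)
    rintro s ⟨Ω', h3, h4⟩
    have hΩ' : Ω'.Nonempty := by rw [← Finset.card_pos]; omega
    obtain ⟨y, hy⟩ := hΩ'
    exact (h4 y hy).trans (hC y)

lemma stepR_le {d : ℕ} (e : Fin d → ℝ) (u : ZLat d → NNReal) (C : NNReal) (hC : ∀ x, u x ≤ C)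
    (x : ZLat d) : stepR e u x ≤ C := by
  by_contra hcon
  push Not at hcon
  have hcon' : C < nthLargest (fun y : {y : ZLat d // sameLine e x y} => u y.1)
    (posIdx (pairing e x)) := hcon
  rw [lt_nthLargest (fun y : {y : ZLat d // sameLine e x y} => u y.1) _ (posIdx_pos _) C
    (fun y => hC y.1)] at hcon'
  obtain ⟨Ω, h1, h2⟩ := hcon'
  have hΩ : Ω.Nonempty := by
    rw [← Finset.card_pos, h1]; exact posIdx_pos _
  obtain ⟨y, hy⟩ := hΩ
  exact absurd (h2 y hy) (not_lt.2 (hC y.1))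

lemma level_step {d : ℕ} (e : Fin d → ℝ) (u : ZLat d → NNReal) (C : NNReal)
    (hC : ∀ x, u x ≤ C) (t : NNReal) : {x | t < stepR e u x} = setR e {x | t < u x} := by
  classical
  ext x
  simp only [Set.mem_ofPred_eq, stepR, setR, pI]
  rw [lt_nthLargest (fun y : {y : ZLat d // sameLine e x y} => u y.1) _ (posIdx_pos _) C
    (fun y => hC y.1)]
  constructor
  · rintro ⟨Ω, h1, h2⟩
    refine ⟨Ω.map (Function.Embedding.subtype _), by simpa using h1, ?_⟩
    intro y hy
    rw [Finset.mem_map] at hy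
    obtain ⟨z, hz, rfl⟩ := hy
    exact ⟨h2 z hz, z.2⟩
  · rintro ⟨Ω, h1, h2⟩
    refine ⟨Ω.subtype _, ?_, ?_⟩
    · rw [Finset.card_subtype, Finset.filter_true_of_mem (fun y hy => (h2 y hy).2), h1]
    · intro y hy
      exact (h2 y.1 (Finset.mem_subtype.1 hy)).1

/-! ### Good directions -/

structure Good {d : ℕ} (e : Fin d → ℝ) (V : ZLat d → ℕ) : Prop where
  equiv : Equivalence (sameLine e)
  inj : ∀ x y, sameLine e x y → pI e x = pI e y → x = y
  surj : ∀ x n, 1 ≤ n → ∃ y, sameLine e x y ∧ pI e y = n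
  mono : ∀ x y, sameLine e x y → pI e x < pI e y → V x < V y

lemma Good.exists_map {d : ℕ} {e : Fin d → ℝ} {V : ZLat d → ℕ} (h : Good e V)
    {A : Set (ZLat d)} (hA : A.Finite) :
    ∃ φ : ZLat d → ZLat d, Set.InjOn φ A ∧ φ '' A = setR e A ∧
      ∀ x ∈ A, V (φ x) ≤ V x ∧ (V (φ x) = V x → φ x = x) := by
  classical
  set F := hA.toFinset with hF
  have memF : ∀ x, x ∈ F ↔ x ∈ A := fun x => by simp [hF]
  set fl : ZLat d → Finset (ZLat d) :=
    fun x => F.filter (fun y => sameLine e x y ∧ pI e y ≤ pI e x) with hfl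
  have memfl : ∀ x y, y ∈ fl x ↔ y ∈ A ∧ sameLine e x y ∧ pI e y ≤ pI e x := by
    intro x y; simp [hfl, memF]
  have rk1 : ∀ x ∈ A, 1 ≤ (fl x).card := by
    intro x hx
    exact Finset.card_pos.2 ⟨x, (memfl x x).2 ⟨hx, h.equiv.refl x, le_rfl⟩⟩
  have rkle : ∀ x, (fl x).card ≤ pI e x := by
    intro x
    have : (fl x).card ≤ (Finset.Icc 1 (pI e x)).card := by
      apply Finset.card_le_card_of_injOn (pI e)
      · intro y hy
        have := (memfl x y).1 hy
        simp only [Finset.coe_Icc, Set.mem_Icc]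
        exact ⟨posIdx_pos _, this.2.2⟩
      · intro y hy z hz hyz
        have h1 := (memfl x y).1 hy
        have h2 := (memfl x z).1 hz
        exact h.inj _ _ (h.equiv.trans (h.equiv.symm h1.2.1) h2.2.1) hyz
    simpa using this
  have rklt : ∀ x y, x ∈ A → y ∈ A → sameLine e x y → pI e x < pI e y →
      (fl x).card < (fl y).card := by
    intro x y hx hy hxy hlt
    apply Finset.card_lt_card
    rw [Finset.ssubset_iff_of_subset]
    · refine ⟨y, (memfl y y).2 ⟨hy, h.equiv.refl y, le_rfl⟩, fun hc => ?_⟩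
      have := (memfl x y).1 hc
      omega
    · intro z hz
      have := (memfl x z).1 hz
      exact (memfl y z).2 ⟨this.1, h.equiv.trans (h.equiv.symm hxy) this.2.1, by omega⟩
  have rkinj : ∀ x y, x ∈ A → y ∈ A → sameLine e x y → (fl x).card = (fl y).card → x = y := by
    intro x y hx hy hxy heq
    apply h.inj _ _ hxy
    rcases lt_trichotomy (pI e x) (pI e y) with hl | hl | hl
    · have := rklt x y hx hy hxy hl; omega
    · exact hl
    · have := rklt y x hy hx (h.equiv.symm hxy) hl; omega
  have hex : ∀ x, ∃ y, x ∈ A → sameLine e x y ∧ pI e y = (fl x).card := by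
    intro x
    by_cases hx : x ∈ A
    · obtain ⟨y, hy⟩ := h.surj x _ (rk1 x hx)
      exact ⟨y, fun _ => hy⟩
    · exact ⟨x, fun hx' => absurd hx' hx⟩
  choose φ hφ using hex
  refine ⟨φ, ?_, ?_, ?_⟩
  · intro x hx y hy hxy
    have h1 := hφ x hx
    have h2 := hφ y hy
    rw [hxy] at h1
    exact rkinj x y hx hy (h.equiv.trans h1.1 (h.equiv.symm h2.1)) (h1.2.symm.trans h2.2)
  · ext z
    constructor
    · rintro ⟨x, hx, rfl⟩
      have h1 := hφ x hx
      refine ⟨fl x, h1.2.symm, fun y hy => ?_⟩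
      have h2 := (memfl x y).1 hy
      exact ⟨h2.1, h.equiv.trans (h.equiv.symm h1.1) h2.2.1⟩
    · rintro ⟨Ω, hc, hΩ⟩
      set B := F.filter (fun y => sameLine e z y) with hB
      have memB : ∀ y, y ∈ B ↔ y ∈ A ∧ sameLine e z y := by intro y; simp [hB, memF]
      have hΩB : Ω ⊆ B := fun y hy => (memB y).2 (hΩ y hy)
      have hle : pI e z ≤ B.card := hc ▸ Finset.card_le_card hΩB
      have hs : Set.SurjOn (fun x => (fl x).card) B (Finset.Icc 1 B.card) := by
        apply Finset.surjOn_of_injOn_of_card_le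
        · intro x hx
          have hx' := (memB x).1 hx
          simp only [Finset.coe_Icc, Set.mem_Icc]
          refine ⟨rk1 x hx'.1, Finset.card_le_card fun y hy => ?_⟩
          have := (memfl x y).1 hy
          exact (memB y).2 ⟨this.1, h.equiv.trans hx'.2 this.2.1⟩
        · intro x hx y hy hxy
          have hx' := (memB x).1 hx
          have hy' := (memB y).1 hy
          exact rkinj x y hx'.1 hy'.1 (h.equiv.trans (h.equiv.symm hx'.2) hy'.2) hxy
        · simp
      have hz : pI e z ∈ (Finset.Icc 1 B.card : Set ℕ) := by
        exact Finset.mem_coe.2 (Finset.mem_Icc.2 ⟨posIdx_pos _, hle⟩)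
      obtain ⟨x, hx, hxz⟩ := hs hz
      have hx' := (memB x).1 hx
      have h1 := hφ x hx'.1
      refine ⟨x, hx'.1, ?_⟩
      apply h.inj _ _ (h.equiv.trans (h.equiv.symm h1.1) (h.equiv.symm hx'.2))
      rw [h1.2]; exact hxz
  · intro x hx
    have h1 := hφ x hx
    have h2 := rkle x
    rw [← h1.2] at h2
    rcases h2.lt_or_eq with hl | hl
    · have := h.mono _ _ (h.equiv.symm h1.1) hl
      exact ⟨this.le, fun hh => by omega⟩
    · have := h.inj _ _ (h.equiv.symm h1.1) hl
      rw [this]; simp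

lemma good_of {d : ℕ} (e : Fin d → ℝ) (g : Fin d → ℤ) (κ : ℤ) (hκ : 0 < κ) (i : Fin d)
    (hgi : g i = 1) (he : ∀ k, e k = κ / 2 * g k) :
    (∀ x y, sameLine e x y ↔ ∃ s : ℤ, ∀ k, x k = y k + s * g k) ∧
    (∀ x, pairing e x = κ * ∑ k, g k * x k) := by
  have hκ' : (κ : ℝ) ≠ 0 := by exact_mod_cast hκ.ne'
  constructor
  · intro x y
    constructor
    · rintro ⟨c, hc⟩
      refine ⟨x i - y i, fun k => ?_⟩
      have h1 := congrFun hc i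
      have h2 := congrFun hc k
      simp only [Pi.smul_apply, smul_eq_mul, he, hgi] at h1 h2
      have : (x k : ℝ) = y k + (x i - y i) * g k := by
        rw [h1]; push_cast; linear_combination h2
      exact_mod_cast this
    · rintro ⟨s, hs⟩
      refine ⟨2 * s / κ, ?_⟩
      funext k
      simp only [Pi.smul_apply, smul_eq_mul, he, hs]
      push_cast
      field_simp
      ring
  · intro x
    unfold pairing
    have : 2 * ∑ k, e k * (x k : ℝ) = ((κ * ∑ k, g k * x k : ℤ) : ℝ) := by
      push_cast
      rw [Finset.mul_sum, Finset.mul_sum]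
      apply Finset.sum_congr rfl
      intro k _
      rw [he]; ring
    rw [this, Int.floor_intCast]

/-- Weights. -/
def wc (d : ℕ) (k : Fin d) : ℤ := (d : ℤ) - (k : ℕ)

def potZ (d : ℕ) (x : ZLat d) : ℤ := ∑ k, ((2 * d + 1) * (x k * x k) - 2 * (wc d k * x k))

def pot (d : ℕ) (x : ZLat d) : ℕ := (potZ d x).toNat

lemma potZ_nonneg (d : ℕ) (x : ZLat d) : 0 ≤ potZ d x := by
  apply Finset.sum_nonneg
  intro k _
  have h1 : 0 < wc d k ∧ wc d k ≤ d := by unfold wc; omega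
  have h2 : x k ≤ x k * x k := by nlinarith [Int.le_self_sq (x k)]
  have h4 : 0 ≤ x k * x k := mul_self_nonneg _
  nlinarith

lemma good_of' {d : ℕ} (e : Fin d → ℝ) (g : Fin d → ℤ) (κ : ℤ) (hκ : 0 < κ) (i : Fin d)
    (hgi : g i = 1) (he : ∀ k, e k = κ / 2 * g k) (hgg : κ * ∑ k, g k * g k = 2)
    (hc0 : 0 < κ * ∑ k, wc d k * g k) (hc1 : κ * ∑ k, wc d k * g k < 2 * d + 1) :
    Good e (pot d) := by
  obtain ⟨hS, hP⟩ := good_of e g κ hκ i hgi he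
  have hPl : ∀ (x y : ZLat d) (s : ℤ), (∀ k, y k = x k + s * g k) →
      pairing e y = pairing e x + 2 * s := by
    intro x y s h
    rw [hP, hP]
    simp only [h, mul_add, Finset.sum_add_distrib]
    have : ∑ k, g k * (s * g k) = s * ∑ k, g k * g k := by
      rw [Finset.mul_sum]; exact Finset.sum_congr rfl fun k _ => by ring
    rw [this]; linear_combination s * hgg
  have hEq : Equivalence (sameLine e) := by
    refine ⟨fun x => (hS x x).2 ⟨0, by simp⟩, ?_, ?_⟩
    · intro x y h
      obtain ⟨s, hs⟩ := (hS x y).1 h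
      exact (hS y x).2 ⟨-s, fun k => by rw [hs]; ring⟩
    · intro x y z h h'
      obtain ⟨s, hs⟩ := (hS x y).1 h
      obtain ⟨s', hs'⟩ := (hS y z).1 h'
      exact (hS x z).2 ⟨s + s', fun k => by rw [hs, hs']; ring⟩
  refine ⟨hEq, ?_, ?_, ?_⟩
  · intro x y h hp
    obtain ⟨s, hs⟩ := (hS y x).1 (hEq.symm h)
    have := hPl x y s hs
    unfold pI posIdx at hp
    have hs0 : s = 0 := by
      rw [this] at hp
      split_ifs at hp <;> omega
    funext k
    rw [hs k, hs0]; ring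
  · intro x n hn
    have key : ∃ s : ℤ, posIdx (pairing e x + 2 * s) = n := by
      unfold posIdx
      by_cases hpar : (2 : ℤ) ∣ n - pairing e x
      · obtain ⟨s, hs⟩ := hpar
        refine ⟨s, ?_⟩
        split_ifs <;> omega
      · refine ⟨(1 - n - pairing e x) / 2, ?_⟩
        split_ifs <;> omega
    obtain ⟨s, hs⟩ := key
    refine ⟨fun k => x k + s * g k, hEq.symm ((hS _ _).2 ⟨s, fun k => rfl⟩), ?_⟩
    unfold pI
    rw [hPl x _ s (fun k => rfl), hs]
  · intro x y h hp
    obtain ⟨s, hs⟩ := (hS y x).1 (hEq.symm h)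
    have hl := hPl x y s hs
    have hΔ : κ * (potZ d y - potZ d x) =
        2 * s * ((2 * d + 1) * (pairing e x + s) - κ * ∑ k, wc d k * g k) := by
      have : potZ d y - potZ d x = (2 * d + 1) * (2 * s * ∑ k, g k * x k)
          + (2 * d + 1) * (s * s * ∑ k, g k * g k) - 2 * s * ∑ k, wc d k * g k := by
        unfold potZ
        rw [← Finset.sum_sub_distrib]
        simp only [Finset.mul_sum]
        rw [← Finset.sum_add_distrib, ← Finset.sum_sub_distrib]
        apply Finset.sum_congr rfl
        intro k _
        rw [hs]; ring
      rw [this, hP x]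
      linear_combination (2 * d + 1) * s * s * hgg
    unfold pI posIdx at hp
    rw [hl] at hp
    have hpos : 0 < 2 * s * ((2 * d + 1) * (pairing e x + s) - κ * ∑ k, wc d k * g k) := by
      rcases lt_trichotomy s 0 with h0 | h0 | h0
      · have : pairing e x + s ≤ 0 := by split_ifs at hp <;> omega
        apply mul_pos_of_neg_of_neg
        · omega
        · nlinarith
      · subst h0; simp at hp
      · have : 1 ≤ pairing e x + s := by split_ifs at hp <;> omega
        apply mul_pos
        · omega
        · nlinarith
    rw [← hΔ] at hpos
    have := (mul_pos_iff_of_pos_left hκ).1 hpos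
    have h1 := potZ_nonneg d x
    have h2 := potZ_nonneg d y
    unfold pot
    omega

lemma mem_EvecList {d : ℕ} (e : Fin d → ℝ) : e ∈ EvecList d ↔ e ∈ Evec d := by
  simp only [EvecList, Evec, List.mem_append, List.mem_map, List.mem_finRange, true_and,
    List.mem_flatMap, List.mem_filterMap, Option.ite_none_right_eq_some, Option.some.injEq,
    Set.mem_ofPred_eq, or_assoc]
  grind

lemma good_mem {d : ℕ} (e : Fin d → ℝ) (he : e ∈ EvecList d) : Good e (pot d) := by
  classical
  rw [mem_EvecList] at he
  rcases he with ⟨i, rfl⟩ | ⟨i, j, hij, rfl⟩ | ⟨i, j, hij, rfl⟩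
  · apply good_of' _ (fun k => if k = i then 1 else 0) 2 (by norm_num) i (by simp)
    · intro k; simp [stdVec]
    · simp
    · simp [wc]
    · simp [wc]
      try omega
  · have hne : i ≠ j := hij.ne
    apply good_of' _ (fun k => (if k = i then 1 else 0) + if k = j then 1 else 0) 1
      (by norm_num) i (by simp [hne])
    · intro k; simp [stdVec]; ring
    · simp [mul_add, Finset.sum_add_distrib, hne, hne.symm]
    · simp [mul_add, Finset.sum_add_distrib, wc]; omega
    · simp [mul_add, Finset.sum_add_distrib, wc]; omega
  · have hne : i ≠ j := hij.ne
    apply good_of' _ (fun k => (if k = i then 1 else 0) - if k = j then 1 else 0) 1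
      (by norm_num) i (by simp [hne])
    · intro k; simp [stdVec]; ring
    · simp [mul_sub, Finset.sum_sub_distrib, hne, hne.symm]
    · simp [mul_sub, Finset.sum_sub_distrib, wc]; omega
    · simp [mul_sub, Finset.sum_sub_distrib, wc]; omega

/-! ### Stabilization of finite sets -/

lemma EvecList_pos (d : ℕ) (hd : 2 ≤ d) : 0 < (EvecList d).length := by
  apply List.length_pos_of_mem (a := stdVec d ⟨0, by omega⟩)
  rw [mem_EvecList]
  exact Or.inl ⟨_, rfl⟩

lemma dir_good (d : ℕ) (hd : 2 ≤ d) (k : ℕ) :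
    Good ((EvecList d).getD (k % (EvecList d).length) 0) (pot d) := by
  apply good_mem
  have := Nat.mod_lt k (EvecList_pos d hd)
  rw [List.getD_eq_getElem _ _ this]
  exact List.getElem_mem _

lemma setIter_finite (d : ℕ) (hd : 2 ≤ d) {A : Set (ZLat d)} (hA : A.Finite) (k : ℕ) :
    (setIter d A k).Finite ∧ (setIter d A k).ncard = A.ncard := by
  induction k with
  | zero => exact ⟨hA, rfl⟩
  | succ k ih =>
    obtain ⟨φ, h1, h2, _⟩ := (dir_good d hd k).exists_map ih.1
    simp only [setIter]
    rw [← h2]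
    exact ⟨ih.1.image _, by rw [Set.InjOn.ncard_image h1, ih.2]⟩

def energy (d : ℕ) (A : Set (ZLat d)) : ℕ := ∑ᶠ x ∈ A, pot d x

lemma energy_step {d : ℕ} {e : Fin d → ℝ} (h : Good e (pot d)) {A : Set (ZLat d)}
    (hA : A.Finite) : energy d (setR e A) ≤ energy d A ∧
      (energy d (setR e A) = energy d A → setR e A = A) := by
  obtain ⟨φ, h1, h2, h3⟩ := h.exists_map hA
  have e1 : energy d (setR e A) = ∑ x ∈ hA.toFinset, pot d (φ x) := by
    rw [energy, ← h2, finsum_mem_image h1, finsum_mem_eq_finite_toFinset_sum _ hA]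
  have e2 : energy d A = ∑ x ∈ hA.toFinset, pot d x := by
    rw [energy, finsum_mem_eq_finite_toFinset_sum _ hA]
  have h3' : ∀ x ∈ hA.toFinset, pot d (φ x) ≤ pot d x := fun x hx => (h3 x (by simpa using hx)).1
  rw [e1, e2]
  refine ⟨Finset.sum_le_sum h3', fun heq => ?_⟩
  rw [Finset.sum_eq_sum_iff_of_le h3'] at heq
  rw [← h2]
  have : ∀ x ∈ A, φ x = x := fun x hx => (h3 x hx).2 (heq x (by simpa using hx))
  ext z
  constructor
  · rintro ⟨x, hx, rfl⟩
    rw [this x hx]; exact hx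
  · intro hz
    exact ⟨z, hz, this z hz⟩

lemma setIter_const (d : ℕ) (hd : 2 ≤ d) {A : Set (ZLat d)} (hA : A.Finite) :
    ∃ K, (∀ k, K ≤ k → setIter d A k = setIter d A K) ∧
      ∀ e ∈ EvecList d, setR e (setIter d A K) = setIter d A K := by
  set E : ℕ → ℕ := fun k => energy d (setIter d A k) with hE
  have hanti : Antitone E := antitone_nat_of_succ_le fun k =>
    (energy_step (dir_good d hd k) (setIter_finite d hd hA k).1).1
  obtain ⟨K, hK⟩ : ∃ K, ∀ k, E K ≤ E k := by
    obtain ⟨K, hK⟩ := WellFounded.has_min (wellFounded_lt (α := ℕ)) (Set.range E) ⟨_, ⟨0, rfl⟩⟩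
    obtain ⟨⟨K, rfl⟩, hK⟩ := hK
    exact ⟨K, fun k => not_lt.1 (hK _ ⟨k, rfl⟩)⟩
  have hstep : ∀ k, K ≤ k → setIter d A (k + 1) = setIter d A k := by
    intro k hk
    apply (energy_step (dir_good d hd k) (setIter_finite d hd hA k).1).2
    exact le_antisymm (hanti (Nat.le_succ k)) ((hanti hk).trans (hK (k+1)))
  have hconst : ∀ k, K ≤ k → setIter d A k = setIter d A K := by
    intro k hk
    induction k, hk using Nat.le_induction with
    | base => rfl
    | succ k hk ih => rw [hstep k hk, ih]
  refine ⟨K, hconst, ?_⟩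
  intro e he
  obtain ⟨j, hj, rfl⟩ := List.getElem_of_mem he
  have hlen := EvecList_pos d hd
  set n := (EvecList d).length with hn
  have hk : K ≤ K * n + j := by nlinarith
  have h1 := hstep _ hk
  rw [hconst _ hk] at h1
  simp only [setIter] at h1
  rw [hconst _ hk] at h1
  have hm : (K * n + j) % (EvecList d).length = j := by
    rw [← hn, add_comm, Nat.add_mul_mod_self_right, Nat.mod_eq_of_lt hj]
  rw [hm, List.getD_eq_getElem _ _ hj] at h1
  exact h1

/-! ### Invariant sets are large -/

lemma inv_down {d : ℕ} {e : Fin d → ℝ} (h : Good e (pot d)) {A : Set (ZLat d)}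
    (hA : setR e A = A) {x y : ZLat d} (hx : x ∈ A) (hxy : sameLine e x y)
    (hp : pI e y ≤ pI e x) : y ∈ A := by
  rw [← hA] at hx ⊢
  obtain ⟨Ω, h1, h2⟩ := hx
  obtain ⟨Ω', h3, h4⟩ := Finset.exists_subset_card_eq (h1 ▸ hp)
  exact ⟨Ω', h4, fun z hz => ⟨(h2 z (h3 hz)).1, h.equiv.trans (h.equiv.symm hxy) (h2 z (h3 hz)).2⟩⟩

lemma posIdx_le {m m' : ℤ} (h : |m'| < |m|) : posIdx m' ≤ posIdx m := by
  unfold posIdx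
  rcases abs_cases m with h1 | h1 <;> rcases abs_cases m' with h2 | h2 <;> split_ifs <;> omega

lemma inv_axis {d : ℕ} {A : Set (ZLat d)} (hA : ∀ e ∈ EvecList d, setR e A = A)
    {x : ZLat d} (hx : x ∈ A) (i : Fin d) (b : ℤ) (hb : |b| < |x i|) :
    Function.update x i b ∈ A := by
  classical
  have hm : stdVec d i ∈ EvecList d := (mem_EvecList _).2 (Or.inl ⟨i, rfl⟩)
  obtain ⟨hS, hP⟩ := good_of (stdVec d i) (fun k => if k = i then 1 else 0) 2 (by norm_num) i
    (by simp) (by intro k; simp [stdVec])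
  apply inv_down (good_mem _ hm) (hA _ hm) hx
  · rw [hS]
    refine ⟨x i - b, fun k => ?_⟩
    by_cases hk : k = i
    · subst hk; simp
    · simp [hk]
  · apply posIdx_le
    rw [hP, hP]
    simp [abs_mul, hb]

lemma inv_diag {d : ℕ} {A : Set (ZLat d)} (hA : ∀ e ∈ EvecList d, setR e A = A)
    {x : ZLat d} (hx : x ∈ A) (i j : Fin d) (hij : i ≠ j) (s : ℤ)
    (hb : |x i + x j + 2 * s| < |x i + x j|) :
    (fun k => x k + s * ((if k = i then 1 else 0) + if k = j then 1 else 0)) ∈ A := by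
  classical
  wlog hlt : i < j generalizing i j
  · have := this j i hij.symm (by rwa [add_comm (x j)]) (lt_of_le_of_ne (not_lt.1 hlt) hij.symm)
    convert this using 4
    ring
  have hm : (fun k => (stdVec d i k + stdVec d j k) / 2) ∈ EvecList d :=
    (mem_EvecList _).2 (Or.inr (Or.inl ⟨i, j, hlt, rfl⟩))
  obtain ⟨hS, hP⟩ := good_of (fun k => (stdVec d i k + stdVec d j k) / 2)
    (fun k => (if k = i then 1 else 0) + if k = j then 1 else 0) 1
    (by norm_num) i (by simp [hij])
    (by intro k; simp [stdVec]; ring)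
  apply inv_down (good_mem _ hm) (hA _ hm) hx
  · rw [hS]
    exact ⟨-s, fun k => by ring⟩
  · apply posIdx_le
    rw [hP, hP]
    simp only [add_mul, ite_mul, one_mul, zero_mul, Finset.sum_add_distrib, Finset.sum_ite_eq',
      Finset.mem_univ, if_true]
    simp only [hij, hij.symm, if_true, if_false]
    convert hb using 2
    ring

lemma inv_spread {d : ℕ} {A : Set (ZLat d)} (hA : ∀ e ∈ EvecList d, setR e A = A)
    {x : ZLat d} (hx : x ∈ A) (i : Fin d) (r : ℕ)
    (hxi : ((d : ℤ) + 2) * (2 * r + 1) ≤ |x i|) (S : Finset (Fin d)) (hiS : i ∉ S) :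
    ∃ y ∈ A, (∀ j ∈ S, (r : ℤ) < |y j|) ∧ |x i| - S.card * (2 * r + 1) ≤ |y i| := by
  classical
  induction S using Finset.induction_on with
  | empty => exact ⟨x, hx, by simp, by simp⟩
  | insert j S hj ih =>
    obtain ⟨y, hy, h1, h2⟩ := ih (fun h => hiS (Finset.mem_insert_of_mem h))
    have hij : i ≠ j := fun h => hiS (h ▸ Finset.mem_insert_self _ _)
    rw [Finset.card_insert_of_notMem hj]
    push_cast
    by_cases hyj : (r : ℤ) < |y j|
    · refine ⟨y, hy, ?_, by linarith⟩
      intro k hk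
      rcases Finset.mem_insert.1 hk with rfl | hk
      · exact hyj
      · exact h1 k hk
    · have hcard : (S.card : ℤ) ≤ d := by
        have := Finset.card_le_univ S
        simp at this
        exact_mod_cast this
      have hbig : 2 * (2 * (r : ℤ) + 1) ≤ |y i| := by nlinarith
      push Not at hyj
      obtain ⟨s, hs1, hs2, hs3⟩ : ∃ s : ℤ, |y i + y j + 2 * s| < |y i + y j| ∧
          (r : ℤ) < |y j + s| ∧ |y i| - (2 * r + 1) ≤ |y i + s| := by
        rcases le_or_gt 0 (y i) with h0 | h0
        · refine ⟨-(2 * r + 1), ?_, ?_, ?_⟩ <;>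
          grind
        · refine ⟨(2 * r + 1), ?_, ?_, ?_⟩ <;>
          grind
      refine ⟨_, inv_diag hA hy i j hij s hs1, ?_, ?_⟩
      · intro k hk
        have hki : k ≠ i := fun h => hiS (h ▸ hk)
        rcases Finset.mem_insert.1 hk with rfl | hk
        · simpa [hki] using hs2
        · have : k ≠ j := fun h => hj (h ▸ hk)
          simpa [hki, this] using h1 k hk
      · simp only [hij, if_true, if_false, add_zero, mul_one]
        linarith

lemma inv_reach {d : ℕ} {A : Set (ZLat d)} (hA : ∀ e ∈ EvecList d, setR e A = A)
    {x : ZLat d} (hx : x ∈ A) (i : Fin d) (r : ℕ)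
    (hxi : ((d : ℤ) + 2) * (2 * r + 1) ≤ |x i|) (x₀ : ZLat d) (h0 : ∀ j, |x₀ j| ≤ r) :
    x₀ ∈ A := by
  classical
  obtain ⟨y, hy, h1, h2⟩ := inv_spread hA hx i r hxi (Finset.univ.erase i) (by simp)
  have hall : ∀ j, |x₀ j| < |y j| := by
    intro j
    by_cases hj : j = i
    · subst hj
      have hcard : (((Finset.univ : Finset (Fin d)).erase j).card : ℤ) ≤ d := by
        have := Finset.card_le_univ ((Finset.univ : Finset (Fin d)).erase j)
        rw [Fintype.card_fin] at this
        exact_mod_cast this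
      have := h0 j
      nlinarith
    · exact (h0 j).trans_lt (h1 j (by simp [hj]))
  have key : ∀ S : Finset (Fin d), S.piecewise x₀ y ∈ A := by
    intro S
    induction S using Finset.induction_on with
    | empty => simpa using hy
    | insert j S hj ih =>
      rw [Finset.piecewise_insert]
      apply inv_axis hA ih
      simpa [hj] using hall j
  simpa using key Finset.univ

/-! ### Levels of iterates -/

lemma level_iter (d : ℕ) (u : ZLat d → NNReal) (hu : BddAbove (Set.range u)) (t : NNReal) (k : ℕ) :
    {x | t < iterR d u k x} = setIter d {x | t < u x} k := by
  obtain ⟨C, hC⟩ := hu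
  have hC0 : ∀ x, u x ≤ C := fun x => hC ⟨x, rfl⟩
  have hCk : ∀ k x, iterR d u k x ≤ C := by
    intro k
    induction k with
    | zero => exact hC0
    | succ k ih => exact fun x => stepR_le _ _ C ih x
  induction k with
  | zero => rfl
  | succ k ih =>
    simp only [iterR, setIter]
    rw [level_step _ _ C (hCk k), ih]

lemma eventually_const (d : ℕ) (hd : 2 ≤ d) (u : ZLat d → NNReal) (hu : BddAbove (Set.range u))
    (x₀ : ZLat d) (t : NNReal) (ht : {x | t < u x}.Finite) (K₀ : ℕ)
    (hK₀ : ∀ k, K₀ ≤ k → t ≤ iterR d u k x₀) :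
    ∃ K : ℕ, ∀ k : ℕ, K ≤ k → iterR d u k x₀ = iterR d u K x₀ := by
  classical
  have hc : ∀ B : Finset (ZLat d), ∃ K, ∀ k, K ≤ k → setIter d B k = setIter d B K := fun B =>
    let ⟨K, h, _⟩ := setIter_const d hd B.finite_toSet
    ⟨K, h⟩
  choose f hf using hc
  set F := ht.toFinset with hF
  set K := max K₀ (F.powerset.sup f) with hK
  have hlev : ∀ s, t ≤ s → ∀ k, K ≤ k →
      (s < iterR d u k x₀ ↔ s < iterR d u K x₀) := by
    intro s hs k hk
    have hfin : {x | s < u x}.Finite := ht.subset fun x hx => lt_of_le_of_lt hs hx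
    have hsub : hfin.toFinset ∈ F.powerset := by
      rw [Finset.mem_powerset]
      intro x hx
      simp only [hF, Set.Finite.mem_toFinset, Set.mem_ofPred_eq] at hx ⊢
      exact lt_of_le_of_lt hs hx
    have h1 : f hfin.toFinset ≤ K := (Finset.le_sup hsub).trans (le_max_right _ _)
    have h2 : ∀ k, K ≤ k → setIter d {x | s < u x} k = setIter d {x | s < u x} (f hfin.toFinset) := by
      intro k hk
      have := hf hfin.toFinset k (h1.trans hk)
      simpa using this
    have h3 := (h2 k hk).trans (h2 K le_rfl).symm
    rw [← level_iter d u hu, ← level_iter d u hu] at h3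
    exact Set.ext_iff.1 h3 x₀
  refine ⟨K, fun k hk => ?_⟩
  have hk0 := hK₀ k ((le_max_left _ _).trans hk)
  have hK0 := hK₀ K (le_max_left _ _)
  apply le_antisymm
  · by_contra hcon
    push Not at hcon
    exact lt_irrefl _ ((hlev _ hK0 k hk).1 hcon)
  · by_contra hcon
    push Not at hcon
    exact lt_irrefl _ ((hlev _ hk0 k hk).2 hcon)

lemma exists_level (d : ℕ) (hd : 2 ≤ d) (u : ZLat d → NNReal) (hu : Admissible u)
    (hb : BddAbove (Set.range u))
    (x₀ : ZLat d) : ∃ t : NNReal, {x | t < u x}.Finite ∧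
      ∃ K₀, ∀ k, K₀ ≤ k → t ≤ iterR d u k x₀ := by
  classical
  by_cases hfin : {x | 0 < u x}.Finite
  · exact ⟨0, hfin, 0, fun _ _ => zero_le⟩
  set r : ℕ := ∑ j, (x₀ j).natAbs with hr
  have h0 : ∀ j, |x₀ j| ≤ r := by
    intro j
    have := Finset.single_le_sum (f := fun j => (x₀ j).natAbs) (fun _ _ => Nat.zero_le _)
      (Finset.mem_univ j)
    rw [Int.abs_eq_natAbs]
    exact_mod_cast this
  set M : ℤ := ((d : ℤ) + 2) * (2 * r + 1) with hM
  set box : Finset (ZLat d) := Finset.Icc (fun _ => -M) (fun _ => M) with hbox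
  obtain ⟨G, hG, hGc⟩ := Set.Infinite.exists_subset_card_eq hfin (box.card + 1)
  have hGne : G.Nonempty := by rw [← Finset.card_pos]; omega
  obtain ⟨z, hz, hzm⟩ := Finset.exists_min_image G u hGne
  have hzpos : 0 < u z := hG hz
  have htfin : {x | u z / 2 < u x}.Finite := hu _ (half_pos hzpos)
  obtain ⟨K, hK, hinv⟩ := setIter_const d hd htfin
  refine ⟨u z / 2, htfin, K, fun k hk => ?_⟩
  have hcard : box.card < (setIter d {x | u z / 2 < u x} K).ncard := by
    rw [(setIter_finite d hd htfin K).2]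
    have : (G : Set (ZLat d)).ncard ≤ {x | u z / 2 < u x}.ncard := by
      apply Set.ncard_le_ncard _ htfin
      intro x hx
      exact lt_of_lt_of_le (half_lt_self hzpos) (hzm x hx)
    rw [Set.ncard_coe_finset] at this
    omega
  have hx₀ : x₀ ∈ setIter d {x | u z / 2 < u x} K := by
    obtain ⟨x, hx, hxb⟩ : ∃ x ∈ setIter d {x | u z / 2 < u x} K, x ∉ box := by
      by_contra hcon
      push Not at hcon
      have : (setIter d {x | u z / 2 < u x} K).ncard ≤ (box : Set (ZLat d)).ncard :=
        Set.ncard_le_ncard hcon box.finite_toSet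
      rw [Set.ncard_coe_finset] at this
      omega
    obtain ⟨i, hi⟩ : ∃ i, M < |x i| := by
      by_contra hcon
      push Not at hcon
      apply hxb
      rw [hbox, Finset.mem_Icc]
      exact ⟨fun i => (abs_le.1 (hcon i)).1, fun i => (abs_le.1 (hcon i)).2⟩
    exact inv_reach hinv hx i r hi.le x₀ h0
  rw [← hK k hk, ← level_iter d u hb] at hx₀
  exact le_of_lt hx₀

lemma Admissible.bdd {α : Type*} {u : α → NNReal} (hu : Admissible u) :
    BddAbove (Set.range u) := by
  obtain ⟨C, hC⟩ := ((hu 1 one_pos).image u).bddAbove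
  refine ⟨max C 1, ?_⟩
  rintro _ ⟨x, rfl⟩
  by_cases hx : 1 < u x
  · exact (hC ⟨x, hx, rfl⟩).trans (le_max_left _ _)
  · exact (not_lt.1 hx).trans (le_max_right _ _)

/-- For admissible `u` on ℤ^d (d ≥ 2) and any point x₀, the sequence R^k u(x₀) is
eventually constant; in particular it converges to R_{ℤ^d} u (x₀), so the Schwarz
rearrangement is well defined. -/
theorem stmt4 (d : ℕ) (hd : 2 ≤ d) (u : ZLat d → NNReal) (hu : Admissible u)
    (x₀ : ZLat d) :
    ∃ K : ℕ, (∀ k : ℕ, K ≤ k → iterR d u k x₀ = iterR d u K x₀) ∧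
      Tendsto (fun k => iterR d u k x₀) atTop (𝓝 (RZd d u x₀)) := by
  have hb := hu.bdd
  obtain ⟨t, ht, K₀, hK₀⟩ := exists_level d hd u hu hb x₀
  obtain ⟨K, hK⟩ := eventually_const d hd u hb x₀ t ht K₀ hK₀
  refine ⟨K, hK, ?_⟩
  have htend : Tendsto (fun k => iterR d u k x₀) atTop (𝓝 (iterR d u K x₀)) :=
    tendsto_const_nhds.congr' (by
      filter_upwards [eventually_ge_atTop K] with k hk
      exact (hK k hk).symm)
  have : RZd d u x₀ = iterR d u K x₀ := htend.limUnder_eq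
  rw [this]
  exact htend

end
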